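/- Let F be a quadratic number field, p a prime number, and let 𝒪 and 𝒪' be orders in F that are both maximal at p. If the rings 𝒪[1/p] and 𝒪'[1/p] are isomorphic, then 𝒪 = 𝒪'. -/

import Mathlib

/-!
An automorphism `σ` of a quadratic field sends an integral element `x` to `x` or to `-a - x`,
where `X² + aX + b` is an integral equation of `x` (`ringHom_apply_mem`). Hence `σ` maps every order
into itself, and also every `𝒪[1/p]`. An isomorphism `𝒪[1/p] ≃ 𝒪'[1/p]` extends to the
common fraction field `F`, so `𝒪'[1/p] ⊆ 𝒪[1/p]`, and equality holds by symmetry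
(`locAway_le_of_equiv`).

It remains to recover `𝒪` from `𝒪[1/p]`: an order maximal at `p` contains every integral `y` with
`p ^ n * y ∈ 𝒪` (`mem_of_pow_mul_mem`). In a ℤ-basis of `𝒪`, the coordinates of `y` are rational
numbers lying in `ℤ_p` by maximality and in `ℤ[1/p]` by `p ^ n * y ∈ 𝒪`, so they are integers.
Elements of `𝒪'` are integral and lie in `𝒪[1/p]`, which gives both inclusions.
-/

open scoped TensorProduct

/-- An order in a number field `F`: a subring that is finitely generated as a ℤ-module
and spans `F` over ℚ. -/
def IsOrder {F : Type*} [Field F] [Algebra ℚ F] (O : Subring F) : Prop :=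
  O.toAddSubgroup.FG ∧ Submodule.span ℚ (O : Set F) = ⊤

/-- A ℤ[1/p]-order in `F`: a subring containing `1/p` (i.e. a ℤ[1/p]-subalgebra),
finitely generated as a ℤ[1/p]-module, and spanning `F` over ℚ.  Finite generation over
ℤ[1/p] is expressed as: there is a finite set `s ⊆ Λ` such that every `x ∈ Λ`
satisfies `p ^ n * x ∈ span_ℤ s` for some `n`. -/
def IsOrderAway {F : Type*} [Field F] [Algebra ℚ F] (p : ℕ) (Λ : Subring F) : Prop :=
  (p : F)⁻¹ ∈ Λ ∧
  (∃ s : Finset F, (s : Set F) ⊆ Λ ∧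
    ∀ x ∈ Λ, ∃ n : ℕ, (p : F) ^ n * x ∈ Submodule.span ℤ (s : Set F)) ∧
  Submodule.span ℚ (Λ : Set F) = ⊤

/-- A subring `O` of `F` is maximal at the prime `l` if the image of `O ⊗_ℤ ℤ_l`
(equivalently, the ℤ_l-subalgebra generated by the image of `O`) in `F ⊗_ℚ ℚ_l` is the
integral closure of `ℤ_l` there. -/
def MaximalAt {F : Type*} [Field F] [Algebra ℚ F] (O : Subring F) (l : ℕ) : Prop :=
  l.Prime ∧ ∀ [Fact l.Prime],
    letI : Algebra ℤ_[l] (ℚ_[l] ⊗[ℚ] F) :=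
      ((algebraMap ℚ_[l] (ℚ_[l] ⊗[ℚ] F)).comp (algebraMap ℤ_[l] ℚ_[l])).toAlgebra
    Algebra.adjoin ℤ_[l]
        ((Algebra.TensorProduct.includeRight : F →ₐ[ℚ] ℚ_[l] ⊗[ℚ] F) '' (O : Set F)) =
      integralClosure ℤ_[l] (ℚ_[l] ⊗[ℚ] F)

/-- The localization `𝒪[1/p]` of an order: the subring generated by `𝒪` and `1/p`. -/
def locAway {F : Type*} [Field F] (p : ℕ) (O : Subring F) : Subring F :=
  O ⊔ Subring.closure {(p : F)⁻¹}

theorem mem_locAway_iff {F : Type*} [Field F] {p : ℕ} (hp : (p : F) ≠ 0) (O : Subring F) (x : F) :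
    x ∈ locAway p O ↔ ∃ n : ℕ, (p : F) ^ n * x ∈ O := by
  constructor
  · intro hx
    replace hx : x ∈ Subring.closure ((O : Set F) ∪ {(p : F)⁻¹}) := by
      rw [Subring.closure_union, Subring.closure_eq]; exact hx
    have hpow : ∀ n : ℕ, (p : F) ^ n ∈ O := fun n => pow_mem (natCast_mem O p) n
    induction hx using Subring.closure_induction with
    | mem x hx =>
      rcases hx with hx | hx
      · exact ⟨0, by simpa using hx⟩
      · refine ⟨1, ?_⟩
        rw [Set.mem_singleton_iff.1 hx, pow_one, mul_inv_cancel₀ hp]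
        exact O.one_mem
    | zero => exact ⟨0, by simp⟩
    | one => exact ⟨0, by simp⟩
    | add x y hx hy ihx ihy =>
      obtain ⟨m, hm⟩ := ihx
      obtain ⟨n, hn⟩ := ihy
      refine ⟨m + n, ?_⟩
      have := O.add_mem (O.mul_mem (hpow n) hm) (O.mul_mem (hpow m) hn)
      convert this using 1
      ring
    | neg x hx ih =>
      obtain ⟨m, hm⟩ := ih
      exact ⟨m, by simpa using hm⟩
    | mul x y hx hy ihx ihy =>
      obtain ⟨m, hm⟩ := ihx
      obtain ⟨n, hn⟩ := ihy
      refine ⟨m + n, ?_⟩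
      have := O.mul_mem hm hn
      convert this using 1
      ring
  · rintro ⟨n, hn⟩
    have h1 : (p : F) ^ n * x ∈ locAway p O := (le_sup_left : O ≤ locAway p O) hn
    have h2 : ((p : F)⁻¹) ^ n ∈ locAway p O :=
      pow_mem ((le_sup_right : _ ≤ locAway p O) (Subring.subset_closure rfl)) n
    have := mul_mem h2 h1
    rwa [← mul_assoc, ← mul_pow, inv_mul_cancel₀ hp, one_pow, one_mul] at this

theorem IsOrder.isIntegral {F : Type*} [Field F] [Algebra ℚ F] {O : Subring F} (hO : IsOrder O)
    {x : F} (hx : x ∈ O) : IsIntegral ℤ x := by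
  refine IsIntegral.of_mem_of_fg (subalgebraOfSubring O) ?_ x hx
  rw [Submodule.fg_iff_addSubgroup_fg]
  exact hO.1

/-- Denominators can be cleared: `F` is the fraction field of any subring spanning it over ℚ. -/
theorem exists_int_mul_mem {F : Type*} [Field F] [Algebra ℚ F] {O : Subring F}
    (hO : Submodule.span ℚ (O : Set F) = ⊤) (x : F) :
    ∃ n : ℤ, n ≠ 0 ∧ (n : F) * x ∈ O := by
  have hx : x ∈ Submodule.span ℚ (O : Set F) := hO ▸ Submodule.mem_top
  induction hx using Submodule.span_induction with
  | mem x hx => exact ⟨1, one_ne_zero, by simpa using hx⟩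
  | zero => exact ⟨1, one_ne_zero, by simp⟩
  | add x y _ _ ihx ihy =>
    obtain ⟨m, hm0, hm⟩ := ihx
    obtain ⟨n, hn0, hn⟩ := ihy
    refine ⟨m * n, mul_ne_zero hm0 hn0, ?_⟩
    have := O.add_mem (O.mul_mem (intCast_mem O n) hm) (O.mul_mem (intCast_mem O m) hn)
    convert this using 1
    push_cast
    ring
  | smul q x _ ih =>
    obtain ⟨m, hm0, hm⟩ := ih
    refine ⟨m * q.den, mul_ne_zero hm0 (by exact_mod_cast q.den_ne_zero), ?_⟩
    have := O.mul_mem (intCast_mem O q.num) hm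
    convert this using 1
    have hq : (q.den : F) * algebraMap ℚ F q = (q.num : F) := by
      rw [← map_natCast (algebraMap ℚ F), ← map_mul, Rat.den_mul_eq_num, map_intCast]
    rw [Algebra.smul_def, ← hq]
    push_cast
    ring

/-- An endomorphism of a quadratic field maps each integral element `x` into any subring
containing `x`: the image is `x` itself or its conjugate, which is an integer minus `x`. -/
theorem ringHom_apply_mem {F : Type*} [Field F] [NumberField F] (hF : Module.finrank ℚ F = 2)
    (σ : F →+* F) (O : Subring F) {x : F} (hx : x ∈ O) (hxi : IsIntegral ℤ x) : σ x ∈ O := by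
  set f := minpoly ℤ x with hf
  have hmonic : f.Monic := minpoly.monic hxi
  have hdeg : f.natDegree ≤ 2 := by
    have h1 := minpoly.isIntegrallyClosed_eq_field_fractions' ℚ hxi
    have h2 : (minpoly ℚ x).natDegree = f.natDegree := by
      rw [h1, hmonic.natDegree_map]
    rw [← h2, ← hF]
    exact minpoly.natDegree_le x
  have hroot : f.eval₂ (Int.castRingHom F) x = 0 := minpoly.aeval ℤ x
  have hroot' : f.eval₂ (Int.castRingHom F) (σ x) = 0 := by
    have := congrArg σ hroot
    rwa [Polynomial.hom_eval₂, map_zero, RingHom.ext_int (σ.comp _) (Int.castRingHom F)] at this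
  have hpos : 0 < f.natDegree := minpoly.natDegree_pos hxi
  have hlead : f.coeff f.natDegree = 1 := hmonic
  rw [Polynomial.eval₂_eq_sum_range] at hroot hroot'
  obtain h | h : f.natDegree = 1 ∨ f.natDegree = 2 := by omega
  · rw [h] at hroot hroot' hlead
    simp only [Finset.sum_range_succ, Finset.sum_range_zero, hlead] at hroot hroot'
    have : σ x = x := by
      simp at hroot hroot'
      linear_combination hroot' - hroot
    rwa [this]
  · rw [h] at hroot hroot' hlead
    simp only [Finset.sum_range_succ, Finset.sum_range_zero, hlead] at hroot hroot'
    have : (σ x - x) * (σ x + x + (f.coeff 1 : F)) = 0 := by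
      simp at hroot hroot'
      linear_combination hroot' - hroot
    rcases mul_eq_zero.1 this with h0 | h0
    · rwa [sub_eq_zero.1 h0]
    · have : σ x = -(f.coeff 1 : F) - x := by linear_combination h0
      rw [this]
      exact O.sub_mem (O.neg_mem (intCast_mem O _)) hx

theorem locAway_le_of_equiv {F : Type*} [Field F] [NumberField F]
    (hF : Module.finrank ℚ F = 2) {p : ℕ} (hp : p.Prime)
    {O O' : Subring F} (hO : IsOrder O) (hO' : IsOrder O')
    (e : ↥(locAway p O) ≃+* ↥(locAway p O')) : locAway p O' ≤ locAway p O := by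
  have hp0 : (p : F) ≠ 0 := by exact_mod_cast hp.ne_zero
  have key : ∀ {R : Subring F}, IsOrder R → IsFractionRing ↥(locAway p R) F := by
    intro R hR
    refine IsFractionRing.of_field _ _ fun z => ?_
    obtain ⟨n, hn0, hn⟩ := exists_int_mul_mem hR.2 z
    have hn0' : (n : F) ≠ 0 := by exact_mod_cast hn0
    refine ⟨⟨_, (le_sup_left : R ≤ locAway p R) hn⟩,
      ⟨(n : F), intCast_mem (locAway p R) n⟩, ?_⟩
    change z = (n : F) * z / (n : F)
    field_simp
  have := key hO
  have := key hO'
  let σ : F ≃+* F := IsFractionRing.ringEquivOfRingEquiv e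
  have hσ : ∀ a : ↥(locAway p O), σ (a : F) = (e a : F) := fun a =>
    IsFractionRing.ringEquivOfRingEquiv_algebraMap (K := F) (L := F) e a
  intro y hy
  obtain ⟨⟨x, hx⟩, hxy⟩ := e.surjective ⟨y, hy⟩
  have hy' : y = σ x := by
    have := hσ ⟨x, hx⟩
    rw [hxy] at this
    exact this.symm
  obtain ⟨n, hn⟩ := (mem_locAway_iff hp0 O x).1 hx
  refine (mem_locAway_iff hp0 O y).2 ⟨n, ?_⟩
  have := ringHom_apply_mem hF (σ : F →+* F) O hn (hO.isIntegral hn)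
  simpa [hy'] using this

/-- A rational number lying in both `ℤ_p` and `ℤ[1/p]` is an integer. -/
theorem exists_int_eq_of_padic_norm_le {p : ℕ} [Fact p.Prime] {q : ℚ} (h : ‖(q : ℚ_[p])‖ ≤ 1)
    {n : ℕ} {m : ℤ} (hm : (p : ℚ) ^ n * q = m) : ∃ k : ℤ, q = k := by
  have hpp : p.Prime := Fact.out
  have hden : ¬ p ∣ q.den := by
    intro hd
    have hu := PadicInt.isUnit_iff.1 (PadicInt.isUnit_den q h)
    have hlt := (PadicInt.norm_int_lt_one_iff_dvd (p := p) (q.den : ℤ)).2 (by exact_mod_cast hd)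
    rw [Int.cast_natCast, hu] at hlt
    exact lt_irrefl _ hlt
  have hd : q.den ∣ p ^ n := by
    have h1 : ((p ^ n : ℤ)) * q.num = m * q.den := by
      have hq := Rat.mul_den_eq_num q
      have : ((p : ℚ) ^ n) * q.num = m * q.den := by rw [← hq, ← hm]; ring
      exact_mod_cast this
    have h2 : (q.den : ℤ) ∣ (p ^ n : ℤ) * q.num := ⟨m, by rw [h1, mul_comm]⟩
    have h3 : IsCoprime (q.den : ℤ) q.num := by
      rw [Int.isCoprime_iff_gcd_eq_one, Int.gcd_comm]
      exact q.reduced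
    have := h3.dvd_of_dvd_mul_right h2
    exact_mod_cast this
  have hd1 : q.den = 1 := by
    have hc : Nat.Coprime q.den (p ^ n) :=
      (Nat.Coprime.pow_left n ((Nat.Prime.coprime_iff_not_dvd hpp).2 hden)).symm
    exact Nat.Coprime.eq_one_of_dvd hc hd
  exact ⟨q.num, ((Rat.den_eq_one_iff q).1 hd1).symm⟩

/-- An order maximal at `p` is `p`-saturated in the integral elements of `F`: compare coordinates
in a ℤ-basis of `O`, which is also a basis of `ℚ_p ⊗ F`. -/
theorem mem_of_pow_mul_mem {F : Type*} [Field F] [NumberField F] {p : ℕ} (hp : p.Prime)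
    {O : Subring F} (hO : IsOrder O) (hmax : MaximalAt O p) {y : F} (hy : IsIntegral ℤ y)
    {n : ℕ} (hn : (p : F) ^ n * y ∈ O) : y ∈ O := by
  have : Fact p.Prime := ⟨hp⟩
  have hmax := hmax.2
  let M : Submodule ℤ F := AddSubgroup.toIntSubmodule O.toAddSubgroup
  have hM : ∀ {x : F}, x ∈ M ↔ x ∈ O := Iff.rfl
  have hMfin : Module.Finite ℤ M := by
    rw [Module.Finite.iff_fg, Submodule.fg_iff_addSubgroup_fg]
    exact hO.1
  let b := Module.Free.chooseBasis ℤ M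
  let v : Module.Free.ChooseBasisIndex ℤ M → F := fun i => (b i : F)
  have hvZ : LinearIndependent ℤ v :=
    b.linearIndependent.map' M.subtype (Submodule.ker_subtype M)
  have hvQ : LinearIndependent ℚ v := (LinearIndependent.iff_fractionRing ℤ ℚ).1 hvZ
  have hsum : ∀ x (hx : x ∈ O), x = ∑ i, ((b.repr ⟨x, hx⟩ i : ℤ) : ℚ) • v i := by
    intro x hx
    have := congrArg (M.subtype) (b.sum_repr ⟨x, hx⟩)
    rw [map_sum] at this
    simp only [map_zsmul, Submodule.subtype_apply] at this
    refine this.symm.trans ?_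
    refine Finset.sum_congr rfl fun i _ => ?_
    rw [Int.cast_smul_eq_zsmul]
  have hspan : ⊤ ≤ Submodule.span ℚ (Set.range v) := by
    rw [← hO.2, Submodule.span_le]
    intro x hx
    rw [hsum x hx]
    exact Submodule.sum_mem _ fun i _ =>
      Submodule.smul_mem _ _ (Submodule.subset_span ⟨i, rfl⟩)
  let B : Module.Basis _ ℚ F := Module.Basis.mk hvQ hspan
  have hB : ∀ i, B i = v i := fun i => Module.Basis.mk_apply hvQ hspan i
  have hcoord : ∀ x ∈ O, ∀ i, ∃ m : ℤ, B.repr x i = m := by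
    intro x hx i
    refine ⟨b.repr ⟨x, hx⟩ i, ?_⟩
    conv_lhs => rw [hsum x hx]
    simp_rw [← hB]
    rw [B.repr_sum_self]
  let C := Algebra.TensorProduct.basis ℚ_[p] B
  have hC : ∀ x i, C.repr (1 ⊗ₜ x) i = ((B.repr x i : ℚ) : ℚ_[p]) := by
    intro x i
    simp [C]
  let : Algebra ℤ_[p] (ℚ_[p] ⊗[ℚ] F) :=
      ((algebraMap ℚ_[p] (ℚ_[p] ⊗[ℚ] F)).comp (algebraMap ℤ_[p] ℚ_[p])).toAlgebra
  have hyint : (1 : ℚ_[p]) ⊗ₜ[ℚ] y ∈ integralClosure ℤ_[p] (ℚ_[p] ⊗[ℚ] F) := by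
    obtain ⟨f, hf, hfy⟩ := hy
    refine ⟨f.map (Int.castRingHom ℤ_[p]), hf.map _, ?_⟩
    have := congrArg (Algebra.TensorProduct.includeRight : F →ₐ[ℚ] ℚ_[p] ⊗[ℚ] F).toRingHom hfy
    rw [Polynomial.hom_eval₂, map_zero] at this
    rw [Polynomial.eval₂_map]
    rwa [RingHom.ext_int (RingHom.comp _ (Int.castRingHom ℤ_[p])) (RingHom.comp _ _)]
  rw [← hmax, ← Subalgebra.mem_toSubmodule, Algebra.adjoin_eq_span] at hyint
  -- The image of `O` is closed under multiplication, so the algebra it generates is its span.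
  have hcl : (Submonoid.closure
      ((Algebra.TensorProduct.includeRight : F →ₐ[ℚ] ℚ_[p] ⊗[ℚ] F) '' (O : Set F)) :
        Set (ℚ_[p] ⊗[ℚ] F)) =
      (Algebra.TensorProduct.includeRight : F →ₐ[ℚ] ℚ_[p] ⊗[ℚ] F) '' (O : Set F) :=
    congrArg _ (Submonoid.closure_eq (O.toSubmonoid.map
      (Algebra.TensorProduct.includeRight : F →ₐ[ℚ] ℚ_[p] ⊗[ℚ] F)))
  rw [hcl] at hyint
  have hnorm : ∀ i, ‖C.repr (1 ⊗ₜ y) i‖ ≤ 1 := by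
    intro i
    generalize (1 : ℚ_[p]) ⊗ₜ[ℚ] y = z at hyint ⊢
    induction hyint using Submodule.span_induction with
    | mem z hz =>
      obtain ⟨x, hx, rfl⟩ := hz
      obtain ⟨m, hm⟩ := hcoord x hx i
      rw [Algebra.TensorProduct.includeRight_apply, hC, hm]
      simpa using Padic.norm_int_le_one (p := p) m
    | zero => simp
    | add x y _ _ hx hy =>
      rw [map_add, Finsupp.add_apply]
      exact (Padic.nonarchimedean _ _).trans (max_le hx hy)
    | smul a x _ hx =>
      -- Unfolds the `ℤ_p`-action of `MaximalAt`, which differs syntactically from the tensor one.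
      change ‖C.repr (algebraMap ℚ_[p] (ℚ_[p] ⊗[ℚ] F) (algebraMap ℤ_[p] ℚ_[p] a) * x) i‖ ≤ 1
      rw [← Algebra.smul_def, map_smul, Finsupp.smul_apply, smul_eq_mul, norm_mul]
      exact mul_le_one₀ a.2 (norm_nonneg _) hx
  rw [← B.sum_repr y]
  refine O.sum_mem fun i _ => ?_
  obtain ⟨m, hm⟩ := hcoord _ hn i
  have hyi := hnorm i
  rw [hC] at hyi
  have hpy : (p : F) ^ n * y = ((p : ℚ) ^ n) • y := by
    rw [Algebra.smul_def]; simp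
  rw [hpy, map_smul, Finsupp.smul_apply, smul_eq_mul] at hm
  obtain ⟨k, hk⟩ := exists_int_eq_of_padic_norm_le hyi hm
  rw [hk, hB, Int.cast_smul_eq_zsmul]
  exact O.zsmul_mem (hM.1 (b i).2) k

/-- If two orders `𝒪, 𝒪'` in a quadratic number field are both maximal at the prime `p`
and the rings `𝒪[1/p]` and `𝒪'[1/p]` are isomorphic, then `𝒪 = 𝒪'`. -/
theorem orders_locAway_isomorphic_eq (F : Type*) [Field F] [NumberField F]
    (hF : Module.finrank ℚ F = 2) (p : ℕ) (hp : p.Prime)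
    (O O' : Subring F) (hO : IsOrder O) (hO' : IsOrder O')
    (hmax : MaximalAt O p) (hmax' : MaximalAt O' p)
    (h : Nonempty (↥(locAway p O) ≃+* ↥(locAway p O'))) : O = O' := by
  obtain ⟨e⟩ := h
  have hp0 : (p : F) ≠ 0 := by exact_mod_cast hp.ne_zero
  have key : ∀ {R S : Subring F}, IsOrder R → IsOrder S → MaximalAt S p →
      (↥(locAway p S) ≃+* ↥(locAway p R)) → R ≤ S := by
    intro R S hR hS hmS e x hx
    have hx' := locAway_le_of_equiv hF hp hS hR e ((le_sup_left : R ≤ locAway p R) hx)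
    obtain ⟨n, hn⟩ := (mem_locAway_iff hp0 S x).1 hx'
    exact mem_of_pow_mul_mem hp hS hmS (hR.isIntegral hx) hn
  exact le_antisymm (key hO hO' hmax' e.symm) (key hO' hO hmax e)
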